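/- arXiv:2307.06306 — 4 statements merged into one kernel-verified Lean document; each statement's English description precedes it below -/
import Mathlib

section
/- Comparison of heterogeneity measures, part (b) (Proposition 4.1(b)): σ*² ≤ 2 L σ_f², i.e. (1/n) Σ_{i=1}^n E_{ξ∼D_i} ‖∇F_i(x*, ξ) − ∇f_i(x*)‖² ≤ 2L · (1/n) Σ_{i=1}^n (f_i(x*) − ℓ_i*). -/
open MeasureTheory Finset

/-!
Let `g(ξ) = ∇F(x, ξ)`. Since `E ‖g - E g‖² = E ‖g‖² - ‖E g‖² ≤ E ‖g‖²`, it suffices that an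
`L`-smooth function `G ≥ ℓ` satisfies `‖∇G x‖² ≤ 2 L (G x - ℓ)`. The descent lemma along the line
through `x` in the direction `∇G x` bounds `G` above by a quadratic polynomial in the step length;
this polynomial stays above `ℓ`, so its discriminant gives the inequality. The same inequality makes
`g` square integrable, as `g` is measurable, being a weak limit of difference quotients of `F`; this
in turn justifies `∇ E F(·, ξ) = E ∇F(·, ξ)` at `x` by dominated convergence.
-/

open scoped Gradient RealInnerProductSpace Topology

section Smooth

variable {E : Type*} [NormedAddCommGroup E] [InnerProductSpace ℝ E] [CompleteSpace E]
  {G : E → ℝ} {L : ℝ} {x : E}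

theorem hasDerivAt_comp_add_smul (hG : Differentiable ℝ G) (x v : E) (t : ℝ) :
    HasDerivAt (fun s : ℝ => G (x + s • v)) ⟪∇ G (x + t • v), v⟫ t := by
  have hline : HasDerivAt (fun s : ℝ => x + s • v) v t := by
    simpa using ((hasDerivAt_id t).smul_const v).const_add x
  exact (hG (x + t • v)).hasGradientAt.hasFDerivAt.comp_hasDerivAt t hline

theorem apply_add_le_of_norm_gradient_sub_le (hG : Differentiable ℝ G)
    (hL : ∀ y, ‖∇ G y - ∇ G x‖ ≤ L * ‖y - x‖) (v : E) :
    G (x + v) ≤ G x + ⟪∇ G x, v⟫ + L / 2 * ‖v‖ ^ 2 := by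
  have hmodel (t : ℝ) : HasDerivAt (fun s => G x + s * ⟪∇ G x, v⟫ + L / 2 * ‖v‖ ^ 2 * s ^ 2)
      (⟪∇ G x, v⟫ + L * ‖v‖ ^ 2 * t) t := by
    refine ((((hasDerivAt_id t).mul_const ⟪∇ G x, v⟫).const_add (G x)).add
      ((hasDerivAt_pow 2 t).const_mul (L / 2 * ‖v‖ ^ 2))).congr_deriv ?_
    push_cast
    ring
  have hslope (t : ℝ) (ht : 0 ≤ t) :
      ⟪∇ G (x + t • v), v⟫ ≤ ⟪∇ G x, v⟫ + L * ‖v‖ ^ 2 * t := by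
    rw [← sub_le_iff_le_add', ← inner_sub_left]
    calc ⟪∇ G (x + t • v) - ∇ G x, v⟫
        ≤ ‖∇ G (x + t • v) - ∇ G x‖ * ‖v‖ := real_inner_le_norm _ _
      _ ≤ L * ‖x + t • v - x‖ * ‖v‖ := by gcongr; exact hL _
      _ = L * ‖v‖ ^ 2 * t := by
        rw [add_sub_cancel_left, norm_smul, Real.norm_of_nonneg ht]
        ring
  have hle := image_le_of_deriv_right_le_deriv_boundary (a := 0) (b := 1)
    (fun t _ => (hasDerivAt_comp_add_smul hG x v t).continuousAt.continuousWithinAt)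
    (fun t _ => (hasDerivAt_comp_add_smul hG x v t).hasDerivWithinAt)
    (by simp) (fun t _ => (hmodel t).continuousAt.continuousWithinAt)
    (fun t _ => (hmodel t).hasDerivWithinAt) (fun t ht => hslope t ht.1)
    (Set.right_mem_Icc.2 zero_le_one)
  simpa using hle

theorem sq_norm_gradient_le (hL₀ : 0 ≤ L) (hG : Differentiable ℝ G)
    (hL : ∀ y, ‖∇ G y - ∇ G x‖ ≤ L * ‖y - x‖) {l : ℝ} (hl : ∀ y, l ≤ G y) :
    ‖∇ G x‖ ^ 2 ≤ 2 * L * (G x - l) := by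
  have hquad (t : ℝ) :
      0 ≤ L / 2 * ‖∇ G x‖ ^ 2 * (t * t) + ‖∇ G x‖ ^ 2 * t + (G x - l) := by
    have hdescent := (hl _).trans (apply_add_le_of_norm_gradient_sub_le hG hL (t • ∇ G x))
    rw [real_inner_smul_right, real_inner_self_eq_norm_sq, norm_smul, mul_pow, Real.norm_eq_abs,
      sq_abs] at hdescent
    linarith
  have hdiscrim := discrim_le_zero hquad
  rw [discrim] at hdiscrim
  obtain hzero | hpos := (sq_nonneg ‖∇ G x‖).eq_or_lt
  · rw [← hzero]
    exact mul_nonneg (by positivity) (sub_nonneg.2 (hl x))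
  · refine le_of_mul_le_mul_left ?_ hpos
    linarith

end Smooth

section Measurability

variable {E : Type*} [NormedAddCommGroup E] [InnerProductSpace ℝ E]
  [TopologicalSpace.SeparableSpace E]

theorem countable_of_orthonormal {ι : Type*} {v : ι → E} (hv : Orthonormal ℝ v) :
    Countable ι := by
  refine Pairwise.countable_of_isOpen_disjoint (s := fun i => Metric.ball (v i) (1 / 2))
    (fun i j hij => Metric.ball_disjoint_ball ?_) (fun _ => Metric.isOpen_ball)
    (fun i => Metric.nonempty_ball.2 one_half_pos)
  have hsq : ‖v i - v j‖ ^ 2 = 2 := by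
    rw [norm_sub_sq_real, hv.1 i, hv.1 j, hv.2 hij]
    norm_num
  rw [dist_eq_norm, add_halves]
  exact (one_le_sq_iff₀ (norm_nonneg _)).1 (by rw [hsq]; exact one_le_two)

variable [CompleteSpace E] {Ω : Type*} [MeasurableSpace Ω] {μ : Measure Ω}

theorem aestronglyMeasurable_of_forall_inner {g : Ω → E}
    (hg : ∀ v, AEStronglyMeasurable (fun ω => ⟪v, g ω⟫) μ) : AEStronglyMeasurable g μ := by
  obtain ⟨_, b, -⟩ := exists_hilbertBasis ℝ E
  have := countable_of_orthonormal b.orthonormal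
  refine aestronglyMeasurable_of_tendsto_ae Filter.atTop
    (f := fun s ω => ∑ i ∈ s, b.repr (g ω) i • b i)
    (fun s => ?_) (ae_of_all μ fun ω => b.hasSum_repr (g ω))
  simp only [b.repr_apply_apply]
  exact Finset.aestronglyMeasurable_fun_sum s fun i _ => (hg (b i)).smul_const (b i)

theorem aestronglyMeasurable_gradient {F : Ω → E → ℝ} (hF : ∀ ω, Differentiable ℝ (F ω))
    (hmeas : ∀ y, AEStronglyMeasurable (fun ω => F ω y) μ) (x : E) :
    AEStronglyMeasurable (fun ω => ∇ (F ω) x) μ := by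
  refine aestronglyMeasurable_of_forall_inner fun v => ?_
  refine aestronglyMeasurable_of_tendsto_ae (𝓝[≠] (0 : ℝ))
    (f := fun t ω => t⁻¹ • (F ω (x + t • v) - F ω x))
    (fun t => ((hmeas (x + t • v)).sub (hmeas x)).const_smul t⁻¹) (ae_of_all μ fun ω => ?_)
  simpa [real_inner_comm] using
    (hasDerivAt_comp_add_smul (hF ω) x v 0).tendsto_slope_zero

end Measurability

section Variance

variable {Ω E : Type*} [MeasurableSpace Ω] {μ : Measure Ω} [IsProbabilityMeasure μ]
  [NormedAddCommGroup E] [InnerProductSpace ℝ E] [CompleteSpace E]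

theorem integral_sq_norm_sub_integral {g : Ω → E} (hg : MemLp g 2 μ) :
    ∫ ω, ‖g ω - ∫ η, g η ∂μ‖ ^ 2 ∂μ = ∫ ω, ‖g ω‖ ^ 2 ∂μ - ‖∫ ω, g ω ∂μ‖ ^ 2 := by
  set m := ∫ ω, g ω ∂μ with hm
  have hg_int : Integrable g μ := hg.integrable one_le_two
  have hsq : Integrable (fun ω => ‖g ω‖ ^ 2) μ := hg.integrable_norm_pow two_ne_zero
  have hinner : Integrable (fun ω => 2 * ⟪m, g ω⟫) μ := (hg_int.const_inner m).const_mul 2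
  have hsub : Integrable (fun ω => ‖g ω‖ ^ 2 - 2 * ⟪m, g ω⟫) μ := hsq.sub hinner
  calc ∫ ω, ‖g ω - m‖ ^ 2 ∂μ = ∫ ω, (‖g ω‖ ^ 2 - 2 * ⟪m, g ω⟫ + ‖m‖ ^ 2) ∂μ := by
        simp only [norm_sub_sq_real, real_inner_comm]
    _ = ∫ ω, ‖g ω‖ ^ 2 ∂μ - 2 * ⟪m, m⟫ + ‖m‖ ^ 2 := by
        rw [integral_add hsub (integrable_const _), integral_sub hsq hinner,
          integral_const_mul, integral_inner hg_int, ← hm, integral_const, probReal_univ, one_smul]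
    _ = ∫ ω, ‖g ω‖ ^ 2 ∂μ - ‖m‖ ^ 2 := by
        rw [real_inner_self_eq_norm_sq]
        ring

end Variance

section StochasticGradient

variable {Ω E : Type*} [MeasurableSpace Ω] {μ : Measure Ω}
  [NormedAddCommGroup E] [InnerProductSpace ℝ E] [CompleteSpace E]
  {F : Ω → E → ℝ} {L l : ℝ} {x : E}

theorem hasGradientAt_integral [IsFiniteMeasure μ] (hF : ∀ ω, Differentiable ℝ (F ω))
    (hL : ∀ ω y, ‖∇ (F ω) y - ∇ (F ω) x‖ ≤ L * ‖y - x‖)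
    (hF_int : ∀ y, Integrable (fun ω => F ω y) μ) (hgrad : Integrable (fun ω => ∇ (F ω) x) μ) :
    HasGradientAt (fun y => ∫ ω, F ω y ∂μ) (∫ ω, ∇ (F ω) x ∂μ) x := by
  let D := InnerProductSpace.toDual ℝ E
  have hbound (ω : Ω) (y : E) (hy : y ∈ Metric.ball x 1) :
      ‖D (∇ (F ω) y)‖ ≤ ‖∇ (F ω) x‖ + |L| := by
    rw [LinearIsometryEquiv.norm_map]
    have hdist : ‖y - x‖ ≤ 1 := (mem_ball_iff_norm.1 hy).le
    calc ‖∇ (F ω) y‖ ≤ ‖∇ (F ω) x‖ + ‖∇ (F ω) y - ∇ (F ω) x‖ := norm_le_norm_add_norm_sub' _ _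
      _ ≤ ‖∇ (F ω) x‖ + L * ‖y - x‖ := by gcongr; exact hL ω y
      _ ≤ ‖∇ (F ω) x‖ + |L| * 1 := by gcongr; exact le_abs_self L
      _ = ‖∇ (F ω) x‖ + |L| := by rw [mul_one]
  have hderiv := hasFDerivAt_integral_of_dominated_of_fderiv_le
    (F' := fun y ω => D (∇ (F ω) y)) (Metric.ball_mem_nhds x one_pos)
    (.of_forall fun y => (hF_int y).aestronglyMeasurable) (hF_int x)
    (D.continuous.comp_aestronglyMeasurable hgrad.aestronglyMeasurable)
    (ae_of_all μ hbound) (hgrad.norm.add (integrable_const |L|))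
    (ae_of_all μ fun ω y _ => (hF ω y).hasGradientAt.hasFDerivAt)
  rw [show ∫ ω, D (∇ (F ω) x) ∂μ = D (∫ ω, ∇ (F ω) x ∂μ) from
    D.toContinuousLinearEquiv.toContinuousLinearMap.integral_comp_comm hgrad] at hderiv
  exact hasGradientAt_iff_hasFDerivAt.2 hderiv

variable [TopologicalSpace.SeparableSpace E]

theorem memLp_two_gradient [IsFiniteMeasure μ] (hL₀ : 0 ≤ L) (hF : ∀ ω, Differentiable ℝ (F ω))
    (hL : ∀ ω y, ‖∇ (F ω) y - ∇ (F ω) x‖ ≤ L * ‖y - x‖) (hl : ∀ ω y, l ≤ F ω y)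
    (hF_int : ∀ y, Integrable (fun ω => F ω y) μ) : MemLp (fun ω => ∇ (F ω) x) 2 μ := by
  have hmeas := aestronglyMeasurable_gradient hF (fun y => (hF_int y).aestronglyMeasurable) x
  refine (memLp_two_iff_integrable_sq_norm hmeas).2 <|
    (((hF_int x).sub (integrable_const l)).const_mul (2 * L)).mono' (hmeas.norm.pow 2)
      (ae_of_all μ fun ω => ?_)
  rw [Real.norm_of_nonneg (sq_nonneg _)]
  exact sq_norm_gradient_le hL₀ (hF ω) (hL ω) (hl ω)

theorem integral_sq_norm_gradient_sub_le [IsProbabilityMeasure μ] (hL₀ : 0 ≤ L)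
    (hF : ∀ ω, Differentiable ℝ (F ω)) (hL : ∀ ω y, ‖∇ (F ω) y - ∇ (F ω) x‖ ≤ L * ‖y - x‖)
    (hl : ∀ ω y, l ≤ F ω y) (hF_int : ∀ y, Integrable (fun ω => F ω y) μ) :
    ∫ ω, ‖∇ (F ω) x - ∇ (fun y => ∫ η, F η y ∂μ) x‖ ^ 2 ∂μ
      ≤ 2 * L * (∫ ω, F ω x ∂μ - l) := by
  have hmem := memLp_two_gradient hL₀ hF hL hl hF_int
  calc ∫ ω, ‖∇ (F ω) x - ∇ (fun y => ∫ η, F η y ∂μ) x‖ ^ 2 ∂μ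
      = ∫ ω, ‖∇ (F ω) x‖ ^ 2 ∂μ - ‖∫ ω, ∇ (F ω) x ∂μ‖ ^ 2 := by
        rw [(hasGradientAt_integral hF hL hF_int (hmem.integrable one_le_two)).gradient,
          integral_sq_norm_sub_integral hmem]
    _ ≤ ∫ ω, ‖∇ (F ω) x‖ ^ 2 ∂μ := sub_le_self _ (sq_nonneg _)
    _ ≤ ∫ ω, 2 * L * (F ω x - l) ∂μ :=
        integral_mono (hmem.integrable_norm_pow two_ne_zero)
          (((hF_int x).sub (integrable_const l)).const_mul (2 * L))
          fun ω => sq_norm_gradient_le hL₀ (hF ω) (hL ω) (hl ω)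
    _ = 2 * L * (∫ ω, F ω x ∂μ - l) := by
        rw [integral_const_mul, integral_sub (hF_int x) (integrable_const l), integral_const,
          probReal_univ, one_smul]

end StochasticGradient

theorem heterogeneity_comparison_b_general {E : Type*} [NormedAddCommGroup E]
    [InnerProductSpace ℝ E] [CompleteSpace E] [TopologicalSpace.SeparableSpace E]
    {n : ℕ} {Ξ : Fin n → Type*} [∀ i, MeasurableSpace (Ξ i)]
    (D : ∀ i, Measure (Ξ i)) [∀ i, IsProbabilityMeasure (D i)]
    (F : ∀ i, Ξ i → E → ℝ) {L : ℝ} (hL : 0 ≤ L) (hdiff : ∀ i ξ, Differentiable ℝ (F i ξ))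
    (x : E) (hsmooth : ∀ i ξ y, ‖∇ (F i ξ) y - ∇ (F i ξ) x‖ ≤ L * ‖y - x‖)
    (ℓ : Fin n → ℝ) (hℓ : ∀ i ξ y, ℓ i ≤ F i ξ y)
    (f : Fin n → E → ℝ) (hf : ∀ i y, f i y = ∫ ξ, F i ξ y ∂(D i))
    (hfint : ∀ i y, Integrable (fun ξ => F i ξ y) (D i)) :
    (n : ℝ)⁻¹ * ∑ i, (∫ ξ, ‖∇ (F i ξ) x - ∇ (f i) x‖ ^ 2 ∂(D i))
      ≤ 2 * L * ((n : ℝ)⁻¹ * ∑ i, (f i x - ℓ i)) := by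
  obtain rfl : f = fun i y => ∫ ξ, F i ξ y ∂(D i) := funext₂ hf
  rw [mul_left_comm, mul_sum univ _ (2 * L)]
  gcongr with i
  exact integral_sq_norm_gradient_sub_le hL (hdiff i) (hsmooth i) (hℓ i) (hfint i)

/-- **Comparison of heterogeneity measures, part (b) (Proposition 4.1(b)):** σ*² ≤ 2Lσ_f². -/
theorem heterogeneity_comparison_b
    {d n : ℕ} (hn : 0 < n)
    {Ξ : Fin n → Type*} [∀ i, MeasurableSpace (Ξ i)]
    (D : ∀ i, Measure (Ξ i)) [∀ i, IsProbabilityMeasure (D i)]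
    (F : ∀ i, Ξ i → EuclideanSpace ℝ (Fin d) → ℝ)
    (L : ℝ) (hL : 0 < L)
    (hdiff : ∀ i ξ, Differentiable ℝ (F i ξ))
    (hsmooth : ∀ i ξ (x y : EuclideanSpace ℝ (Fin d)),
      ‖gradient (F i ξ) x - gradient (F i ξ) y‖ ≤ L * ‖x - y‖)
    (hbdd : ∀ i ξ, BddBelow (Set.range (F i ξ)))
    (ℓ : Fin n → ℝ) (hℓ : ∀ i ξ x, ℓ i ≤ F i ξ x)
    (f : Fin n → EuclideanSpace ℝ (Fin d) → ℝ)
    (hf : ∀ i x, f i x = ∫ ξ, F i ξ x ∂(D i))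
    (hfint : ∀ i x, Integrable (fun ξ => F i ξ x) (D i))
    (hgrad : ∀ i x, gradient (f i) x = ∫ ξ, gradient (F i ξ) x ∂(D i))
    (xstar : EuclideanSpace ℝ (Fin d))
    (hxstar : ∀ y, (n : ℝ)⁻¹ * ∑ i, f i xstar ≤ (n : ℝ)⁻¹ * ∑ i, f i y) :
    (n : ℝ)⁻¹ * ∑ i, (∫ ξ, ‖gradient (F i ξ) xstar - gradient (f i) xstar‖ ^ 2 ∂(D i))
      ≤ 2 * L * ((n : ℝ)⁻¹ * ∑ i, (f i xstar - ℓ i)) :=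
  heterogeneity_comparison_b_general D F hL.le hdiff xstar (fun i ξ y => hsmooth i ξ y xstar)
    ℓ hℓ f hf hfint
end

section
/- Difference lemma for FedSPS, convex case with any stepsizes (Lemma B.3, deterministic form): Let n ≥ 1, τ ≥ 1, c ≥ 2τ², γ_b > 0, and let t_0 ≤ t with t − t_0 ≤ τ. For each client i ∈ {1,…,n} and each j ∈ {t_0,…,t−1}, let F_{i,j} : ℝ^d → ℝ be differentiable with F_{i,j}(x) ≥ ℓ_i* for all x. Suppose x_{t_0}^i = y for all i (a common point), and for j = t_0, …, t−1 the iterates evolve by x_{j+1}^i = x_j^i − γ_j^i g_j^i, where g_j^i := ∇F_{i,j}(x_j^i) and γ_j^i := min{(F_{i,j}(x_j^i) − ℓ_i*)/(c‖g_j^i‖²), γ_b} (set γ_j^i := γ_b if g_j^i = 0). Then with x̄_t := (1/n)Σ_{i=1}^n x_t^i it holds that (1/n) Σ_{i=1}^n ‖x̄_t − x_t^i‖² ≤ (1/(2nτ)) Σ_{i=1}^n Σ_{j=t_0}^{t−1} γ_j^i (F_{i,j}(x_j^i) − ℓ_i*). -/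
open Finset

/-!
The mean minimizes the sum of squared distances, so the variance around `x̄_t` is at most the mean
squared distance to the common starting point `y`. A client moves at most `τ` steps away from `y`,
so by Cauchy–Schwarz its squared distance to `y` is at most `τ` times its sum of squared steps.
The Polyak rule bounds each squared step by `γ / c` times the gap, and `c ≥ 2 τ ^ 2` turns
`τ / c` into `1 / (2 τ)`.
-/

section Mean

variable {ι E : Type*}

lemma sum_sub_mean_eq_zero [AddCommGroup E] [Module ℝ E] {s : Finset ι} (hs : s.Nonempty)
    (z : ι → E) :
    ∑ i ∈ s, (z i - (#s : ℝ)⁻¹ • ∑ k ∈ s, z k) = 0 := by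
  have hcard : (#s : ℝ) ≠ 0 := Nat.cast_ne_zero.2 hs.card_ne_zero
  rw [sum_sub_distrib, sum_const, ← Nat.cast_smul_eq_nsmul ℝ, smul_inv_smul₀ hcard, sub_self]

variable [NormedAddCommGroup E] [InnerProductSpace ℝ E]

lemma sum_norm_sub_sq_eq_sum_norm_mean_sub_sq_add {s : Finset ι} (hs : s.Nonempty)
    (z : ι → E) (y : E) :
    ∑ i ∈ s, ‖z i - y‖ ^ 2 =
      ∑ i ∈ s, ‖(#s : ℝ)⁻¹ • ∑ k ∈ s, z k - z i‖ ^ 2 +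
        #s * ‖(#s : ℝ)⁻¹ • ∑ k ∈ s, z k - y‖ ^ 2 := by
  set m := (#s : ℝ)⁻¹ • ∑ k ∈ s, z k with hm
  have expand (i : ι) :
      ‖z i - y‖ ^ 2 = ‖m - z i‖ ^ 2 + 2 * inner ℝ (z i - m) (m - y) + ‖m - y‖ ^ 2 := by
    rw [norm_sub_rev m, ← norm_add_sq_real, sub_add_sub_cancel]
  have cross : ∑ i ∈ s, inner ℝ (z i - m) (m - y) = 0 := by
    rw [← sum_inner, hm, sum_sub_mean_eq_zero hs, inner_zero_left]
  simp_rw [expand, sum_add_distrib, ← mul_sum, cross, sum_const, nsmul_eq_mul, mul_zero, add_zero]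

lemma sum_norm_mean_sub_sq_le_sum_norm_sub_sq {s : Finset ι} (hs : s.Nonempty)
    (z : ι → E) (y : E) :
    ∑ i ∈ s, ‖(#s : ℝ)⁻¹ • ∑ k ∈ s, z k - z i‖ ^ 2 ≤ ∑ i ∈ s, ‖z i - y‖ ^ 2 := by
  rw [sum_norm_sub_sq_eq_sum_norm_mean_sub_sq_add hs z y]
  exact le_add_of_nonneg_right (by positivity)

end Mean

lemma dist_sq_le_mul_sum_Ico_dist_sq {X : Type*} [PseudoMetricSpace X] (x : ℕ → X) {a b : ℕ}
    (hab : a ≤ b) :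
    dist (x a) (x b) ^ 2 ≤ (b - a : ℕ) * ∑ j ∈ Ico a b, dist (x j) (x (j + 1)) ^ 2 :=
  calc
    dist (x a) (x b) ^ 2 ≤ (∑ j ∈ Ico a b, dist (x j) (x (j + 1))) ^ 2 := by
      gcongr
      exact dist_le_Ico_sum_dist x hab
    _ ≤ (b - a : ℕ) * ∑ j ∈ Ico a b, dist (x j) (x (j + 1)) ^ 2 := by
      simpa only [Nat.card_Ico] using sq_sum_le_card_mul_sum_sq (s := Ico a b)

section PolyakStepsize

variable {E : Type*} [SeminormedAddCommGroup E] {c γb δ : ℝ}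

/-- The capped Polyak stepsize with scaling `c` and cap `γb`, for a step along `-g` when the
objective exceeds its lower bound by `δ`. At `g = 0`, where the quotient would be `δ / 0 = 0`, the
stepsize is the cap. -/
noncomputable def polyakStepsize (c γb δ : ℝ) (g : E) [Decidable (g = 0)] : ℝ :=
  if g = 0 then γb else min (δ / (c * ‖g‖ ^ 2)) γb

lemma polyakStepsize_nonneg (hc : 0 ≤ c) (hγb : 0 ≤ γb) (hδ : 0 ≤ δ) (g : E)
    [Decidable (g = 0)] : 0 ≤ polyakStepsize c γb δ g := by
  unfold polyakStepsize
  split_ifs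
  · exact hγb
  · exact le_min (by positivity) hγb

lemma polyakStepsize_mul_le (hc : 0 ≤ c) (hδ : 0 ≤ δ) (g : E) [Decidable (g = 0)] :
    polyakStepsize c γb δ g * (c * ‖g‖ ^ 2) ≤ δ := by
  unfold polyakStepsize
  split_ifs with hg
  · simpa [hg] using hδ
  · exact mul_le_of_le_div₀ hδ (by positivity) (min_le_left _ _)

end PolyakStepsize

section LocalSteps

variable {E : Type*} [SeminormedAddCommGroup E] [NormedSpace ℝ E]

lemma mul_norm_smul_sq_le {c γ δ : ℝ} {g : E} (hγ : 0 ≤ γ) (h : γ * (c * ‖g‖ ^ 2) ≤ δ) :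
    c * ‖γ • g‖ ^ 2 ≤ γ * δ :=
  calc
    c * ‖γ • g‖ ^ 2 = γ * (γ * (c * ‖g‖ ^ 2)) := by
      rw [norm_smul, Real.norm_of_nonneg hγ]
      ring
    _ ≤ γ * δ := mul_le_mul_of_nonneg_left h hγ

lemma norm_sub_sq_le_of_local_steps {τ t0 t : ℕ} (hτ : 1 ≤ τ) {c : ℝ} (hc : 2 * (τ : ℝ) ^ 2 ≤ c)
    (ht0 : t0 ≤ t) (ht : t - t0 ≤ τ) {x g : ℕ → E} {γ δ : ℕ → ℝ}
    (hx : ∀ j ∈ Ico t0 t, x (j + 1) = x j - γ j • g j)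
    (hγ : ∀ j ∈ Ico t0 t, 0 ≤ γ j) (hδ : ∀ j ∈ Ico t0 t, γ j * (c * ‖g j‖ ^ 2) ≤ δ j) :
    ‖x t - x t0‖ ^ 2 ≤ 1 / (2 * τ) * ∑ j ∈ Ico t0 t, γ j * δ j := by
  set S := ∑ j ∈ Ico t0 t, dist (x j) (x (j + 1)) ^ 2
  have displacement : ‖x t - x t0‖ ^ 2 ≤ τ * S := by
    rw [← dist_eq_norm, dist_comm]
    exact (dist_sq_le_mul_sum_Ico_dist_sq x ht0).trans (by gcongr)
  have steps : c * S ≤ ∑ j ∈ Ico t0 t, γ j * δ j := by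
    rw [mul_sum]
    refine sum_le_sum fun j hj => ?_
    rw [hx j hj, dist_self_sub_right]
    exact mul_norm_smul_sq_le (hγ j hj) (hδ j hj)
  calc
    ‖x t - x t0‖ ^ 2 ≤ τ * S := displacement
    _ = 1 / (2 * τ) * (2 * (τ : ℝ) ^ 2 * S) := by field_simp
    _ ≤ 1 / (2 * τ) * (c * S) := by gcongr
    _ ≤ 1 / (2 * τ) * ∑ j ∈ Ico t0 t, γ j * δ j := by gcongr

end LocalSteps

-- `g j i` and `δ j i` stand for `∇F_{i,j}(x_j^i)` and `F_{i,j}(x_j^i) - ℓ_i`.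
theorem fedsps_difference_lemma_general {ι E : Type*} [Fintype ι] [Nonempty ι]
    [NormedAddCommGroup E] [InnerProductSpace ℝ E] [DecidableEq E] {τ t0 t : ℕ} (hτ : 1 ≤ τ)
    {c γb : ℝ} (hc : 2 * (τ : ℝ) ^ 2 ≤ c) (hγb : 0 ≤ γb) (ht0 : t0 ≤ t) (ht : t - t0 ≤ τ)
    {y : E} {x g : ℕ → ι → E} {γ δ : ℕ → ι → ℝ} (hxy : ∀ i, x t0 i = y)
    (hδ : ∀ i, ∀ j ∈ Ico t0 t, 0 ≤ δ j i)
    (hγ : ∀ i, ∀ j ∈ Ico t0 t, γ j i = polyakStepsize c γb (δ j i) (g j i))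
    (hx : ∀ i, ∀ j ∈ Ico t0 t, x (j + 1) i = x j i - γ j i • g j i) :
    (Fintype.card ι : ℝ)⁻¹ * ∑ i, ‖(Fintype.card ι : ℝ)⁻¹ • ∑ k, x t k - x t i‖ ^ 2
      ≤ 1 / (2 * Fintype.card ι * τ) * ∑ i, ∑ j ∈ Ico t0 t, γ j i * δ j i := by
  have hc0 : 0 ≤ c := le_trans (by positivity) hc
  have client (i : ι) : ‖x t i - y‖ ^ 2 ≤ 1 / (2 * τ) * ∑ j ∈ Ico t0 t, γ j i * δ j i := by
    rw [← hxy i]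
    refine norm_sub_sq_le_of_local_steps (x := (x · i)) hτ hc ht0 ht (hx i)
      (fun j hj => ?_) fun j hj => ?_
    · exact hγ i j hj ▸ polyakStepsize_nonneg hc0 hγb (hδ i j hj) (g j i)
    · exact hγ i j hj ▸ polyakStepsize_mul_le hc0 (hδ i j hj) (g j i)
  calc
    _ ≤ (Fintype.card ι : ℝ)⁻¹ * ∑ i, ‖x t i - y‖ ^ 2 :=
      mul_le_mul_of_nonneg_left
        (sum_norm_mean_sub_sq_le_sum_norm_sub_sq univ_nonempty (x t) y) (by positivity)
    _ ≤ (Fintype.card ι : ℝ)⁻¹ * ∑ i, 1 / (2 * τ) * ∑ j ∈ Ico t0 t, γ j i * δ j i := by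
      gcongr with i
      exact client i
    _ = 1 / (2 * Fintype.card ι * τ) * ∑ i, ∑ j ∈ Ico t0 t, γ j i * δ j i := by
      rw [← mul_sum]
      field_simp

open scoped Classical in
/-- **Difference lemma for FedSPS, convex case with any stepsizes (Lemma B.3).** -/
theorem fedsps_difference_lemma
    {d n : ℕ} (hn : 1 ≤ n) (τ : ℕ) (hτ : 1 ≤ τ)
    (c γb : ℝ) (hc : (2 * τ ^ 2 : ℝ) ≤ c) (hγb : 0 < γb)
    (t0 t : ℕ) (ht0 : t0 ≤ t) (ht : t - t0 ≤ τ)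
    (F : Fin n → ℕ → EuclideanSpace ℝ (Fin d) → ℝ)
    (hdiff : ∀ i j, Differentiable ℝ (F i j))
    (ℓ : Fin n → ℝ) (hℓ : ∀ i j x, ℓ i ≤ F i j x)
    (y : EuclideanSpace ℝ (Fin d))
    (x : ℕ → Fin n → EuclideanSpace ℝ (Fin d))
    (hxy : ∀ i, x t0 i = y)
    (γ : ℕ → Fin n → ℝ)
    (hγ : ∀ j i, γ j i =
      if gradient (F i j) (x j i) = 0 then γb
      else min ((F i j (x j i) - ℓ i) / (c * ‖gradient (F i j) (x j i)‖ ^ 2)) γb)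
    (hx : ∀ j i, t0 ≤ j → j < t →
      x (j + 1) i = x j i - γ j i • gradient (F i j) (x j i)) :
    (n : ℝ)⁻¹ * ∑ i, ‖((n : ℝ)⁻¹ • ∑ k, x t k) - x t i‖ ^ 2
      ≤ (1 / (2 * n * τ)) * ∑ i, ∑ j ∈ Finset.Ico t0 t, γ j i * (F i j (x j i) - ℓ i) := by
  have : Nonempty (Fin n) := Fin.pos_iff_nonempty.1 hn
  simpa only [Fintype.card_fin] using fedsps_difference_lemma_general hτ hc hγb.le ht0 ht hxy
    (fun i j _ => sub_nonneg.2 (hℓ i j (x j i))) (fun i j _ => hγ j i)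
    (fun i j hj => (mem_Ico.1 hj).elim (hx j i))
end

section
/- Client-drift recursion for small stepsizes (key inequality in Lemma B.4): Let n ≥ 1, τ ≥ 1, L > 0 and 0 < γ_b ≤ 1/(10Lτ). For each i ∈ {1,…,n} let G_i : ℝ^d → ℝ be differentiable and L-smooth, let x_t^1, …, x_t^n ∈ ℝ^d with average x̄_t := (1/n)Σ_i x_t^i and drift R_t := (1/n)Σ_i‖x̄_t − x_t^i‖², and let x_{t+1}^i := x_t^i − γ_t^i ∇G_i(x_t^i) with stepsizes 0 ≤ γ_t^i ≤ γ_b. Then R_{t+1} := (1/n)Σ_i‖x̄_{t+1} − x_t^i + γ_t^i∇G_i(x_t^i)‖²-style drift of the updated points, namely R_{t+1} = (1/n)Σ_i‖x̄_{t+1} − x_{t+1}^i‖² with x̄_{t+1} = (1/n)Σ_i x_{t+1}^i, satisfies R_{t+1} ≤ (1 + 2/τ) R_t + (4τγ_b²/n) Σ_{i=1}^n ‖∇G_i(x̄_t)‖². -/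
open Finset

/-!
The barycentre of weighted points minimises the weighted sum of squared distances, so the new mean
may be replaced by any reference point `c`. Young's inequality with parameter `1 / τ` then separates
`c - xᵢ` from the step `γᵢ • vᵢ(xᵢ)`, and `L`-Lipschitz continuity bounds `‖vᵢ(xᵢ)‖ ^ 2` by
`2 * L ^ 2 * ‖xᵢ - c‖ ^ 2 + 2 * ‖vᵢ(c)‖ ^ 2`. The condition `2 * τ * L * γᵢ ≤ 1` makes the first of
these terms contribute at most another `1 / τ` times `‖c - xᵢ‖ ^ 2`.
-/

lemma norm_add_sq_le_of_pos {E : Type*} [SeminormedAddCommGroup E] {ε : ℝ} (hε : 0 < ε)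
    (x y : E) : ‖x + y‖ ^ 2 ≤ (1 + ε) * ‖x‖ ^ 2 + (1 + ε⁻¹) * ‖y‖ ^ 2 := by
  calc ‖x + y‖ ^ 2 ≤ (‖x‖ + ‖y‖) ^ 2 := by gcongr; exact norm_add_le x y
    _ = ‖x‖ ^ 2 + 2 * ‖x‖ * ‖y‖ + ‖y‖ ^ 2 := add_sq _ _
    _ ≤ ‖x‖ ^ 2 + (ε * ‖x‖ ^ 2 + ε⁻¹ * ‖y‖ ^ 2) + ‖y‖ ^ 2 := by
      gcongr
      exact two_mul_le_add_mul_sq hε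
    _ = (1 + ε) * ‖x‖ ^ 2 + (1 + ε⁻¹) * ‖y‖ ^ 2 := by ring

lemma norm_sub_sub_smul_sq_le {E : Type*} [SeminormedAddCommGroup E] [NormedSpace ℝ E]
    {τ L γ : ℝ} (hτ : 1 ≤ τ) (hL : 0 ≤ L) (hγ : 2 * τ * L * |γ| ≤ 1) {c x u v : E}
    (huv : ‖u - v‖ ≤ L * ‖x - c‖) :
    ‖c - (x - γ • u)‖ ^ 2 ≤ (1 + 2 / τ) * ‖c - x‖ ^ 2 + 4 * τ * γ ^ 2 * ‖v‖ ^ 2 := by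
  have hτ₀ : 0 < τ := by linarith
  have hu : ‖u‖ ^ 2 ≤ 2 * (L * ‖c - x‖) ^ 2 + 2 * ‖v‖ ^ 2 := by
    calc ‖u‖ ^ 2 = ‖(u - v) + v‖ ^ 2 := by rw [sub_add_cancel]
      _ ≤ 2 * ‖u - v‖ ^ 2 + 2 * ‖v‖ ^ 2 := by
        simpa [one_add_one_eq_two] using norm_add_sq_le_of_pos one_pos (u - v) v
      _ ≤ 2 * (L * ‖c - x‖) ^ 2 + 2 * ‖v‖ ^ 2 := by
        rw [norm_sub_rev c x]
        gcongr
  have hcoeff : 4 * τ * γ ^ 2 * L ^ 2 ≤ 1 / τ := by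
    rw [le_div_iff₀ hτ₀]
    calc 4 * τ * γ ^ 2 * L ^ 2 * τ = (2 * τ * L * |γ|) ^ 2 := by rw [mul_pow, sq_abs]; ring
      _ ≤ 1 := pow_le_one₀ (by positivity) hγ
  calc ‖c - (x - γ • u)‖ ^ 2 = ‖(c - x) + γ • u‖ ^ 2 := by
        rw [sub_sub_eq_add_sub, add_sub_right_comm]
    _ ≤ (1 + 1 / τ) * ‖c - x‖ ^ 2 + (1 + τ) * ‖γ • u‖ ^ 2 := by
      simpa using norm_add_sq_le_of_pos (one_div_pos.2 hτ₀) (c - x) (γ • u)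
    _ = (1 + 1 / τ) * ‖c - x‖ ^ 2 + (1 + τ) * γ ^ 2 * ‖u‖ ^ 2 := by
      rw [norm_smul, mul_pow, Real.norm_eq_abs, sq_abs, mul_assoc]
    _ ≤ (1 + 1 / τ) * ‖c - x‖ ^ 2
          + (τ + τ) * γ ^ 2 * (2 * (L * ‖c - x‖) ^ 2 + 2 * ‖v‖ ^ 2) := by gcongr
    _ = (1 + 1 / τ + 4 * τ * γ ^ 2 * L ^ 2) * ‖c - x‖ ^ 2 + 4 * τ * γ ^ 2 * ‖v‖ ^ 2 := by ring
    _ ≤ (1 + 1 / τ + 1 / τ) * ‖c - x‖ ^ 2 + 4 * τ * γ ^ 2 * ‖v‖ ^ 2 := by gcongr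
    _ = (1 + 2 / τ) * ‖c - x‖ ^ 2 + 4 * τ * γ ^ 2 * ‖v‖ ^ 2 := by ring

section Barycentre

variable {ι E : Type*} [SeminormedAddCommGroup E] [InnerProductSpace ℝ E]
  {s : Finset ι} {w : ι → ℝ}

lemma sum_mul_norm_sub_sq (hw : ∑ i ∈ s, w i = 1) (y : ι → E) (c : E) :
    ∑ i ∈ s, w i * ‖c - y i‖ ^ 2 =
      ‖c - ∑ k ∈ s, w k • y k‖ ^ 2 + ∑ i ∈ s, w i * ‖∑ k ∈ s, w k • y k - y i‖ ^ 2 := by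
  set m := ∑ k ∈ s, w k • y k with hm
  have hcentred : ∑ i ∈ s, w i • (m - y i) = 0 := by
    simp only [smul_sub, sum_sub_distrib, ← sum_smul, hw, one_smul, ← hm, sub_self]
  have hcross : ∑ i ∈ s, w i * inner ℝ (c - m) (m - y i) = 0 := by
    simp only [← real_inner_smul_right, ← inner_sum, hcentred, inner_zero_right]
  calc ∑ i ∈ s, w i * ‖c - y i‖ ^ 2
      = ∑ i ∈ s, (w i * ‖c - m‖ ^ 2 + 2 * (w i * inner ℝ (c - m) (m - y i))
          + w i * ‖m - y i‖ ^ 2) := by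
        refine sum_congr rfl fun i _ => ?_
        rw [← sub_add_sub_cancel c m (y i), norm_add_sq_real]
        ring
    _ = ‖c - m‖ ^ 2 + ∑ i ∈ s, w i * ‖m - y i‖ ^ 2 := by
        rw [sum_add_distrib, sum_add_distrib, ← mul_sum, hcross, ← sum_mul, hw]
        ring

lemma sum_mul_norm_barycentre_sub_sq_le (hw : ∑ i ∈ s, w i = 1) (y : ι → E) (c : E) :
    ∑ i ∈ s, w i * ‖∑ k ∈ s, w k • y k - y i‖ ^ 2 ≤ ∑ i ∈ s, w i * ‖c - y i‖ ^ 2 := by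
  rw [sum_mul_norm_sub_sq hw y c]
  exact le_add_of_nonneg_left (sq_nonneg _)

theorem client_drift_recursion_general (hw₀ : ∀ i ∈ s, 0 ≤ w i) (hw₁ : ∑ i ∈ s, w i = 1)
    {τ L γb : ℝ} (hτ : 1 ≤ τ) (hL : 0 ≤ L) (hγb : 2 * τ * L * γb ≤ 1)
    {v : ι → E → E} {x : ι → E} {c : E} (hv : ∀ i ∈ s, ‖v i (x i) - v i c‖ ≤ L * ‖x i - c‖)
    {γ : ι → ℝ} (hγ : ∀ i ∈ s, |γ i| ≤ γb)
    {x' : ι → E} (hx' : ∀ i ∈ s, x' i = x i - γ i • v i (x i)) :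
    ∑ i ∈ s, w i * ‖∑ k ∈ s, w k • x' k - x' i‖ ^ 2 ≤
      (1 + 2 / τ) * ∑ i ∈ s, w i * ‖c - x i‖ ^ 2
        + 4 * τ * γb ^ 2 * ∑ i ∈ s, w i * ‖v i c‖ ^ 2 := by
  have hclient : ∀ i ∈ s, ‖c - x' i‖ ^ 2 ≤
      (1 + 2 / τ) * ‖c - x i‖ ^ 2 + 4 * τ * γb ^ 2 * ‖v i c‖ ^ 2 := fun i hi => by
    have hγi : 2 * τ * L * |γ i| ≤ 1 :=
      (mul_le_mul_of_nonneg_left (hγ i hi) (by positivity)).trans hγb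
    have hγsq : γ i ^ 2 ≤ γb ^ 2 := sq_le_sq.2 ((hγ i hi).trans (le_abs_self γb))
    calc ‖c - x' i‖ ^ 2 ≤ (1 + 2 / τ) * ‖c - x i‖ ^ 2 + 4 * τ * γ i ^ 2 * ‖v i c‖ ^ 2 := by
          rw [hx' i hi]
          exact norm_sub_sub_smul_sq_le hτ hL hγi (hv i hi)
      _ ≤ (1 + 2 / τ) * ‖c - x i‖ ^ 2 + 4 * τ * γb ^ 2 * ‖v i c‖ ^ 2 := by gcongr
  calc ∑ i ∈ s, w i * ‖∑ k ∈ s, w k • x' k - x' i‖ ^ 2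
      ≤ ∑ i ∈ s, w i * ‖c - x' i‖ ^ 2 := sum_mul_norm_barycentre_sub_sq_le hw₁ x' c
    _ ≤ ∑ i ∈ s, w i * ((1 + 2 / τ) * ‖c - x i‖ ^ 2 + 4 * τ * γb ^ 2 * ‖v i c‖ ^ 2) :=
        sum_le_sum fun i hi => mul_le_mul_of_nonneg_left (hclient i hi) (hw₀ i hi)
    _ = (1 + 2 / τ) * ∑ i ∈ s, w i * ‖c - x i‖ ^ 2
          + 4 * τ * γb ^ 2 * ∑ i ∈ s, w i * ‖v i c‖ ^ 2 := by
        simp only [mul_add, sum_add_distrib, mul_sum, mul_left_comm]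

end Barycentre

/-- **Client-drift recursion for small stepsizes (key inequality in Lemma B.4).** -/
theorem client_drift_recursion
    {d n : ℕ} (hn : 1 ≤ n) (τ : ℕ) (hτ : 1 ≤ τ)
    (L γb : ℝ) (hL : 0 < L) (hγb : 0 < γb) (hγbsmall : γb ≤ 1 / (10 * L * τ))
    (G : Fin n → EuclideanSpace ℝ (Fin d) → ℝ)
    (hdiff : ∀ i, Differentiable ℝ (G i))
    (hsmooth : ∀ i (x y : EuclideanSpace ℝ (Fin d)),
      ‖gradient (G i) x - gradient (G i) y‖ ≤ L * ‖x - y‖)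
    (xt : Fin n → EuclideanSpace ℝ (Fin d))
    (γ : Fin n → ℝ) (hγ : ∀ i, 0 ≤ γ i ∧ γ i ≤ γb)
    (xt1 : Fin n → EuclideanSpace ℝ (Fin d))
    (hxt1 : ∀ i, xt1 i = xt i - γ i • gradient (G i) (xt i))
    (xbar : EuclideanSpace ℝ (Fin d)) (hxbar : xbar = (n : ℝ)⁻¹ • ∑ i, xt i) :
    (n : ℝ)⁻¹ * ∑ i, ‖((n : ℝ)⁻¹ • ∑ k, xt1 k) - xt1 i‖ ^ 2
      ≤ (1 + 2 / τ) * ((n : ℝ)⁻¹ * ∑ i, ‖xbar - xt i‖ ^ 2)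
        + (4 * τ * γb ^ 2 / n) * ∑ i, ‖gradient (G i) xbar‖ ^ 2 := by
  have hγbL : 2 * τ * L * γb ≤ 1 := by
    calc 2 * τ * L * γb ≤ 10 * τ * L * γb := by gcongr; norm_num
      _ = γb * (10 * L * τ) := by ring
      _ ≤ 1 := (le_div_iff₀ (by positivity)).1 hγbsmall
  simpa only [← smul_sum, ← mul_sum, div_eq_mul_inv, mul_assoc] using
    client_drift_recursion_general (s := univ) (w := fun _ => (n : ℝ)⁻¹)
      (fun _ _ => by positivity) (by simp [show n ≠ 0 by omega]) (Nat.one_le_cast.2 hτ) hL.le hγbL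
      (fun i _ => hsmooth i (xt i) xbar) (fun i _ => (abs_of_nonneg (hγ i).1).trans_le (hγ i).2)
      (fun i _ => hxt1 i)
end

section
/- Per-step decrease inequality for small-stepsize FedSPS (deterministic inequality from the proof of Theorem 4.5(a)): Let n ≥ 1, L > 0, 0 < γ_b ≤ 1/(10L). For each i ∈ {1,…,n} let F_i : ℝ^d → ℝ be differentiable, convex and L-smooth, with F_i(x) ≥ ℓ_i* for all x. Let x_t^1,…,x_t^n ∈ ℝ^d with average x̄_t := (1/n)Σ_i x_t^i and drift R_t := (1/n)Σ_i‖x̄_t − x_t^i‖², and set x̄_{t+1} := (1/n)Σ_i (x_t^i − γ_b ∇F_i(x_t^i)). Then for every x* ∈ ℝ^d: ‖x̄_{t+1} − x*‖² ≤ ‖x̄_t − x*‖² − (2γ_b/n) Σ_{i=1}^n (F_i(x̄_t) − F_i(x*)) + 2 γ_b L R_t + (4Lγ_b²/n) Σ_{i=1}^n (F_i(x̄_t) − ℓ_i*). -/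
open Finset

/-!
Convexity and the descent lemma at `xᵢ` combine into
`Fᵢ(x̄) - Fᵢ(x*) - (L/2) ‖x̄ - xᵢ‖² ≤ ⟪x̄ - x*, ∇Fᵢ(xᵢ)⟫`, so every client gradient, although
evaluated away from `x̄`, still makes progress at `x̄` up to the drift. The second-order term
`γ² ‖∇Fᵢ(xᵢ)‖²` is moved to `x̄` by smoothness, again at the cost of drift, and there
`‖∇Fᵢ(x̄)‖² ≤ 2L (Fᵢ(x̄) - ℓᵢ)` because `Fᵢ` is bounded below. The drift terms add up to
`γL (1 + 2γL) ‖x̄ - xᵢ‖²`, which is at most `2γL ‖x̄ - xᵢ‖²` as soon as `γL ≤ 1/2`.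
Averaging over the clients is Jensen's inequality for `‖·‖²`.
-/

open scoped Gradient NNReal RealInnerProductSpace

section SmoothFunctions

variable {E : Type*} [NormedAddCommGroup E] [InnerProductSpace ℝ E] [CompleteSpace E]
  {f : E → ℝ} {s : Set E} {K : ℝ≥0} {x y : E}

theorem hasDerivAt_comp_lineMap_of_hasGradientAt {g : E} {t : ℝ}
    (hf : HasGradientAt f g (AffineMap.lineMap x y t)) :
    HasDerivAt (fun r : ℝ ↦ f (AffineMap.lineMap x y r)) ⟪g, y - x⟫ t :=
  hf.hasFDerivAt.comp_hasDerivAt t AffineMap.hasDerivAt_lineMap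

theorem inner_le_sub_of_convexOn_of_hasGradientAt {g : E} (hconv : ConvexOn ℝ s f)
    (hx : x ∈ s) (hy : y ∈ s) (hf : HasGradientAt f g x) :
    ⟪g, y - x⟫ ≤ f y - f x := by
  have hline : ConvexOn ℝ (AffineMap.lineMap x y ⁻¹' s) (f ∘ AffineMap.lineMap (k := ℝ) x y) :=
    hconv.comp_affineMap _
  have hderiv : HasDerivAt (f ∘ AffineMap.lineMap (k := ℝ) x y) ⟪g, y - x⟫ 0 :=
    hasDerivAt_comp_lineMap_of_hasGradientAt (by simpa using hf)
  simpa [slope_def_field] using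
    hline.le_slope_of_hasDerivAt (by simpa using hx) (by simpa using hy) one_pos hderiv

theorem le_add_inner_gradient_add_sq_of_lipschitzOnWith (hs : Convex ℝ s)
    (hdiff : ∀ z ∈ s, DifferentiableAt ℝ f z) (hlip : LipschitzOnWith K (∇ f) s)
    (hx : x ∈ s) (hy : y ∈ s) :
    f y ≤ f x + ⟪∇ f x, y - x⟫ + K / 2 * ‖y - x‖ ^ 2 := by
  have hderiv (t : ℝ) (ht : t ∈ Set.Icc 0 1) :
      HasDerivAt (fun r : ℝ ↦ f (AffineMap.lineMap x y r))
        ⟪∇ f (AffineMap.lineMap x y t), y - x⟫ t :=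
    hasDerivAt_comp_lineMap_of_hasGradientAt
      (hdiff _ (hs.lineMap_mem hx hy ht)).hasGradientAt
  have hderiv_bound (t : ℝ) :
      HasDerivAt (fun r : ℝ ↦ f x + r * ⟪∇ f x, y - x⟫ + r ^ 2 * (K / 2 * ‖y - x‖ ^ 2))
        (⟪∇ f x, y - x⟫ + t * (K * ‖y - x‖ ^ 2)) t := by
    refine ((((hasDerivAt_id t).mul_const _).const_add (f x)).add
      ((hasDerivAt_pow 2 t).mul_const _)).congr_deriv ?_
    push_cast
    ring
  have hderiv_le (t : ℝ) (ht : t ∈ Set.Icc 0 1) :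
      ⟪∇ f (AffineMap.lineMap x y t), y - x⟫ ≤ ⟪∇ f x, y - x⟫ + t * (K * ‖y - x‖ ^ 2) := by
    have hgrad : ‖∇ f (AffineMap.lineMap x y t) - ∇ f x‖ ≤ K * (t * ‖y - x‖) := by
      simpa [← dist_eq_norm, dist_lineMap_left, abs_of_nonneg ht.1, dist_comm x y]
        using hlip.dist_le_mul _ (hs.lineMap_mem hx hy ht) x hx
    rw [← sub_le_iff_le_add', ← inner_sub_left]
    calc ⟪∇ f (AffineMap.lineMap x y t) - ∇ f x, y - x⟫
        ≤ ‖∇ f (AffineMap.lineMap x y t) - ∇ f x‖ * ‖y - x‖ := real_inner_le_norm _ _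
      _ ≤ K * (t * ‖y - x‖) * ‖y - x‖ := by gcongr
      _ = t * (K * ‖y - x‖ ^ 2) := by ring
  simpa using image_le_of_deriv_right_le_deriv_boundary
    (fun t ht ↦ (hderiv t ht).continuousAt.continuousWithinAt)
    (fun t ht ↦ (hderiv t (Set.Ico_subset_Icc_self ht)).hasDerivWithinAt) (by simp)
    (fun t _ ↦ (hderiv_bound t).continuousAt.continuousWithinAt)
    (fun t _ ↦ (hderiv_bound t).hasDerivWithinAt)
    (fun t ht ↦ hderiv_le t (Set.Ico_subset_Icc_self ht)) (Set.right_mem_Icc.2 zero_le_one)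

theorem norm_gradient_sq_le_of_forall_le (hdiff : Differentiable ℝ f)
    (hlip : LipschitzWith K (∇ f)) {l : ℝ} (hl : ∀ z, l ≤ f z) (x : E) :
    ‖∇ f x‖ ^ 2 ≤ 2 * K * (f x - l) := by
  -- Comparing `l` with `f (x - t • ∇ f x)` for all `t` at once, instead of at `t = 1 / K`,
  -- covers `K = 0`.
  have hquad (t : ℝ) :
      0 ≤ K / 2 * ‖∇ f x‖ ^ 2 * (t * t) + -‖∇ f x‖ ^ 2 * t + (f x - l) := by
    have hdescent := le_add_inner_gradient_add_sq_of_lipschitzOnWith convex_univ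
      (fun z _ ↦ hdiff z) hlip.lipschitzOnWith (Set.mem_univ x) (Set.mem_univ (x - t • ∇ f x))
    simp only [sub_sub_cancel_left, inner_neg_right, inner_smul_right, norm_neg, norm_smul,
      real_inner_self_eq_norm_sq, mul_pow, Real.norm_eq_abs, sq_abs] at hdescent
    linarith [hl (x - t • ∇ f x)]
  have hdiscrim := discrim_le_zero hquad
  rw [discrim] at hdiscrim
  rcases (sq_nonneg ‖∇ f x‖).eq_or_lt with hzero | hpos
  · rw [← hzero]
    have : 0 ≤ f x - l := sub_nonneg.2 (hl x)
    positivity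
  · refine le_of_mul_le_mul_right ?_ hpos
    linarith

theorem sub_sub_le_inner_gradient_of_convexOn {z : E} (hconv : ConvexOn ℝ s f)
    (hdiff : ∀ a ∈ s, DifferentiableAt ℝ f a) (hlip : LipschitzOnWith K (∇ f) s)
    (hx : x ∈ s) (hy : y ∈ s) (hz : z ∈ s) :
    f y - f z - K / 2 * ‖y - x‖ ^ 2 ≤ ⟪y - z, ∇ f x⟫ := by
  have hupper : f y ≤ f x + ⟪∇ f x, y - x⟫ + K / 2 * ‖y - x‖ ^ 2 :=
    le_add_inner_gradient_add_sq_of_lipschitzOnWith hconv.1 hdiff hlip hx hy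
  have hlower : ⟪∇ f x, z - x⟫ ≤ f z - f x :=
    inner_le_sub_of_convexOn_of_hasGradientAt hconv hx hz (hdiff x hx).hasGradientAt
  have hsplit : ⟪y - z, ∇ f x⟫ = ⟪∇ f x, y - x⟫ - ⟪∇ f x, z - x⟫ := by
    rw [← inner_sub_right, sub_sub_sub_cancel_right, real_inner_comm]
  linarith

theorem norm_gradient_sq_le_dist_sq_add (hdiff : Differentiable ℝ f)
    (hlip : LipschitzWith K (∇ f)) {l : ℝ} (hl : ∀ z, l ≤ f z) (x y : E) :
    ‖∇ f x‖ ^ 2 ≤ 2 * K ^ 2 * ‖y - x‖ ^ 2 + 4 * K * (f y - l) := by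
  have hgrad : ‖∇ f x - ∇ f y‖ ≤ K * ‖y - x‖ := norm_sub_rev x y ▸ hlip.norm_sub_le x y
  calc ‖∇ f x‖ ^ 2
      ≤ (‖∇ f x - ∇ f y‖ + ‖∇ f y‖) ^ 2 := by gcongr; exact norm_le_norm_sub_add _ _
    _ ≤ 2 * (‖∇ f x - ∇ f y‖ ^ 2 + ‖∇ f y‖ ^ 2) := add_sq_le
    _ ≤ 2 * ((K * ‖y - x‖) ^ 2 + 2 * K * (f y - l)) := by
      gcongr
      exact norm_gradient_sq_le_of_forall_le hdiff hlip hl y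
    _ = 2 * K ^ 2 * ‖y - x‖ ^ 2 + 4 * K * (f y - l) := by ring

theorem sq_mul_norm_gradient_sq_sub_inner_le {γ : ℝ} (hγ₀ : 0 ≤ γ) (hγ : γ * K ≤ 1 / 2)
    (hdiff : Differentiable ℝ f) (hconv : ConvexOn ℝ Set.univ f) (hlip : LipschitzWith K (∇ f))
    {l : ℝ} (hl : ∀ z, l ≤ f z) (x y z : E) :
    γ ^ 2 * ‖∇ f x‖ ^ 2 - 2 * γ * ⟪y - z, ∇ f x⟫ ≤
      -(2 * γ) * (f y - f z) + 2 * γ * K * ‖y - x‖ ^ 2 + 4 * K * γ ^ 2 * (f y - l) := by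
  have hdrift : 2 * γ * K * (γ * K) * ‖y - x‖ ^ 2 ≤ 2 * γ * K * (1 / 2) * ‖y - x‖ ^ 2 := by
    gcongr
  calc γ ^ 2 * ‖∇ f x‖ ^ 2 - 2 * γ * ⟪y - z, ∇ f x⟫
      ≤ γ ^ 2 * (2 * K ^ 2 * ‖y - x‖ ^ 2 + 4 * K * (f y - l))
          - 2 * γ * (f y - f z - K / 2 * ‖y - x‖ ^ 2) := by
        gcongr
        · exact norm_gradient_sq_le_dist_sq_add hdiff hlip hl x y
        · exact sub_sub_le_inner_gradient_of_convexOn hconv (fun a _ ↦ hdiff a)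
            hlip.lipschitzOnWith (Set.mem_univ x) (Set.mem_univ y) (Set.mem_univ z)
    _ ≤ _ := by linarith

end SmoothFunctions

section WeightedAverage

variable {ι E : Type*} [Fintype ι] [NormedAddCommGroup E] {w : ι → ℝ}

theorem norm_sum_smul_sq_le [NormedSpace ℝ E] (hw₀ : ∀ i, 0 ≤ w i) (hw₁ : ∑ i, w i = 1)
    (v : ι → E) : ‖∑ i, w i • v i‖ ^ 2 ≤ ∑ i, w i * ‖v i‖ ^ 2 :=
  (convexOn_univ_norm.pow (fun _ _ ↦ norm_nonneg _) 2).map_sum_le (fun i _ ↦ hw₀ i) hw₁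
    fun _ _ ↦ Set.mem_univ _

theorem norm_sum_smul_sub_smul_sub_sq_le [InnerProductSpace ℝ E] (hw₀ : ∀ i, 0 ≤ w i)
    (hw₁ : ∑ i, w i = 1) (γ : ℝ) (x v : ι → E) (z : E) :
    ‖∑ i, w i • (x i - γ • v i) - z‖ ^ 2 ≤ ‖∑ i, w i • x i - z‖ ^ 2 +
      ∑ i, w i * (γ ^ 2 * ‖v i‖ ^ 2 - 2 * γ * ⟪∑ j, w j • x j - z, v i⟫) := by
  set y := ∑ i, w i • x i - z
  have hstep : ∑ i, w i • (x i - γ • v i) - z = y - γ • ∑ i, w i • v i := by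
    simp only [y, smul_sub, sum_sub_distrib, smul_comm _ γ, smul_sum]
    abel
  calc ‖∑ i, w i • (x i - γ • v i) - z‖ ^ 2
      = ‖y‖ ^ 2 + (γ ^ 2 * ‖∑ i, w i • v i‖ ^ 2 - 2 * γ * ⟪y, ∑ i, w i • v i⟫) := by
        rw [hstep, norm_sub_sq_real, inner_smul_right, norm_smul, mul_pow, Real.norm_eq_abs,
          sq_abs]
        ring
    _ ≤ ‖y‖ ^ 2 + (γ ^ 2 * ∑ i, w i * ‖v i‖ ^ 2 - 2 * γ * ⟪y, ∑ i, w i • v i⟫) := by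
        gcongr
        exact norm_sum_smul_sq_le hw₀ hw₁ v
    _ = ‖y‖ ^ 2 + ∑ i, w i * (γ ^ 2 * ‖v i‖ ^ 2 - 2 * γ * ⟪y, v i⟫) := by
        simp only [inner_sum, inner_smul_right, mul_sum, ← sum_sub_distrib]
        congr! 2
        ring

end WeightedAverage

theorem fedsps_small_stepsize_per_step_decrease_general {ι E : Type*} [Fintype ι]
    [NormedAddCommGroup E] [InnerProductSpace ℝ E] [CompleteSpace E]
    {w : ι → ℝ} (hw₀ : ∀ i, 0 ≤ w i) (hw₁ : ∑ i, w i = 1)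
    {K : ℝ≥0} {γ : ℝ} (hγ₀ : 0 ≤ γ) (hγ : γ * K ≤ 1 / 2)
    {F : ι → E → ℝ} (hdiff : ∀ i, Differentiable ℝ (F i))
    (hconv : ∀ i, ConvexOn ℝ Set.univ (F i)) (hlip : ∀ i, LipschitzWith K (∇ (F i)))
    {ℓ : ι → ℝ} (hℓ : ∀ i z, ℓ i ≤ F i z)
    {x : ι → E} {xbar : E} (hxbar : xbar = ∑ i, w i • x i) (z : E) :
    ‖∑ i, w i • (x i - γ • ∇ (F i) (x i)) - z‖ ^ 2 ≤ ‖xbar - z‖ ^ 2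
      - 2 * γ * ∑ i, w i * (F i xbar - F i z)
      + 2 * γ * K * ∑ i, w i * ‖xbar - x i‖ ^ 2
      + 4 * K * γ ^ 2 * ∑ i, w i * (F i xbar - ℓ i) := by
  calc ‖∑ i, w i • (x i - γ • ∇ (F i) (x i)) - z‖ ^ 2
      ≤ ‖xbar - z‖ ^ 2 + ∑ i, w i * (γ ^ 2 * ‖∇ (F i) (x i)‖ ^ 2
          - 2 * γ * ⟪xbar - z, ∇ (F i) (x i)⟫) :=
        hxbar ▸ norm_sum_smul_sub_smul_sub_sq_le hw₀ hw₁ γ x _ z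
    _ ≤ ‖xbar - z‖ ^ 2 + ∑ i, w i * (-(2 * γ) * (F i xbar - F i z)
          + 2 * γ * K * ‖xbar - x i‖ ^ 2 + 4 * K * γ ^ 2 * (F i xbar - ℓ i)) := by
        gcongr with i
        · exact hw₀ i
        · exact sq_mul_norm_gradient_sq_sub_inner_le hγ₀ hγ (hdiff i) (hconv i) (hlip i) (hℓ i)
            (x i) xbar z
    _ = _ := by
        simp only [mul_add, sum_add_distrib, mul_left_comm (w _), ← mul_sum]
        ring

/-- **Per-step decrease inequality for small-stepsize FedSPS (from the proof of Theorem 4.5(a)).** -/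
theorem fedsps_small_stepsize_per_step_decrease
    {d n : ℕ} (hn : 1 ≤ n)
    (L γb : ℝ) (hL : 0 < L) (hγb : 0 < γb) (hγbsmall : γb ≤ 1 / (10 * L))
    (F : Fin n → EuclideanSpace ℝ (Fin d) → ℝ)
    (hdiff : ∀ i, Differentiable ℝ (F i))
    (hconv : ∀ i, ConvexOn ℝ Set.univ (F i))
    (hsmooth : ∀ i (x y : EuclideanSpace ℝ (Fin d)),
      ‖gradient (F i) x - gradient (F i) y‖ ≤ L * ‖x - y‖)
    (ℓ : Fin n → ℝ) (hℓ : ∀ i x, ℓ i ≤ F i x)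
    (xt : Fin n → EuclideanSpace ℝ (Fin d))
    (xbar xbar1 : EuclideanSpace ℝ (Fin d))
    (hxbar : xbar = (n : ℝ)⁻¹ • ∑ i, xt i)
    (hxbar1 : xbar1 = (n : ℝ)⁻¹ • ∑ i, (xt i - γb • gradient (F i) (xt i)))
    (xstar : EuclideanSpace ℝ (Fin d)) :
    ‖xbar1 - xstar‖ ^ 2 ≤ ‖xbar - xstar‖ ^ 2
      - 2 * γb / n * ∑ i, (F i xbar - F i xstar)
      + 2 * γb * L * ((n : ℝ)⁻¹ * ∑ i, ‖xbar - xt i‖ ^ 2)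
      + 4 * L * γb ^ 2 / n * ∑ i, (F i xbar - ℓ i) := by
  have hn₀ : (n : ℝ) ≠ 0 := by positivity
  have hγL : γb * L ≤ 1 / 2 := by
    rw [le_div_iff₀ (by positivity)] at hγbsmall
    linarith
  lift L to ℝ≥0 using hL.le
  subst hxbar1
  convert fedsps_small_stepsize_per_step_decrease_general (w := fun _ ↦ (n : ℝ)⁻¹)
    (fun _ ↦ by positivity) (by simp [hn₀]) hγb.le hγL hdiff hconv
    (fun i ↦ LipschitzWith.of_dist_le_mul (by simpa only [dist_eq_norm] using hsmooth i)) hℓ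
    (hxbar.trans smul_sum) xstar using 1
  · rw [smul_sum]
  · simp only [← mul_sum]
    ring
end
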